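/- arXiv:1903.07349 — 3 statements merged into one kernel-verified Lean document; each statement's English description precedes it below -/
import Mathlib

section
/- Let κ > 0 and M ≥ 0, set S = 2M²/κ² and γ_k = 1/(κ(k+1)) for k ≥ 1. Let (d_k)_{k≥0} be a sequence of nonnegative reals satisfying d_0 ≤ S and d_k ≤ (1 − 2κγ_k) d_{k−1} + 2γ_k² M² for all k ≥ 1. Then d_k ≤ S/(k+1) for all k ≥ 0. -/
/-!
Substituting the step size, the recursion at index `n + 1` reads
`d (n + 1) ≤ n / (n + 2) * d n + S / (n + 2) ^ 2`. The coefficient of `d n` is nonnegative, so the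
bound `d n ≤ S / (n + 1)` may be inserted, and the result is at most `S / (n + 2)` because
`n / (n + 1) + 1 / (n + 2) ≤ n / (n + 1) + 1 / (n + 1) = 1`.
-/

/-- The deterministic induction behind the SA rate: if `d_0 ≤ S = 2M²/κ²` and
`d_k ≤ (1 − 2κγ_k) d_{k−1} + 2γ_k² M²` with `γ_k = 1/(κ(k+1))`, then `d_k ≤ S/(k+1)`. -/
theorem stmt_9 (κ M : ℝ) (hκ : 0 < κ) (hM : 0 ≤ M)
    (S : ℝ) (hS : S = 2 * M ^ 2 / κ ^ 2)
    (γ : ℕ → ℝ) (hγ : ∀ k : ℕ, 1 ≤ k → γ k = 1 / (κ * (k + 1)))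
    (d : ℕ → ℝ) (hdnn : ∀ k, 0 ≤ d k)
    (hd0 : d 0 ≤ S)
    (hrec : ∀ k : ℕ, 1 ≤ k → d k ≤ (1 - 2 * κ * γ k) * d (k - 1) + 2 * γ k ^ 2 * M ^ 2) :
    ∀ k : ℕ, d k ≤ S / (k + 1) := by
  have hS0 : 0 ≤ S := by rw [hS]; positivity
  intro k
  induction k with
  | zero => simpa using hd0
  | succ n ih =>
    have h := hrec (n + 1) (by omega)
    rw [hγ (n + 1) (by omega), Nat.add_sub_cancel] at h
    push_cast at h ⊢
    have hn : (0 : ℝ) ≤ n := n.cast_nonneg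
    have hcoef : 1 - 2 * κ * (1 / (κ * ((n : ℝ) + 1 + 1))) = n / (n + 2) := by
      field_simp
      ring
    have hnoise : 2 * (1 / (κ * ((n : ℝ) + 1 + 1))) ^ 2 * M ^ 2 = S / (n + 2) ^ 2 := by
      rw [hS]
      field_simp
      ring
    rw [hcoef, hnoise] at h
    -- The slack in the induction step is `S / ((n + 1) (n + 2)) - S / (n + 2) ^ 2 ≥ 0`.
    have hslack : S / ((n : ℝ) + 1 + 1) - (n / (n + 2) * (S / (n + 1)) + S / (n + 2) ^ 2)
        = S / ((n + 1) * (n + 2) ^ 2) := by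
      field_simp
      ring
    have hslack_nonneg : 0 ≤ S / (((n : ℝ) + 1) * (n + 2) ^ 2) := by positivity
    have hmono : (n : ℝ) / (n + 2) * d n ≤ n / (n + 2) * (S / (n + 1)) := by gcongr
    linarith
end

section
/- Let X ⊂ ℝ^n be a nonempty convex compact set, let η ∈ ℝ^{n×mK} be a fixed matrix, and let φ : ℝ^{mK} → ℝ^{mK} be continuous and monotone, such that the field F(z) = η φ(ηᵀz) is monotone with modulus κ > 0 on X. Let x ∈ X and let y ∈ ℝ^{mK} be arbitrary, and let x̂(y) ∈ X be a weak solution to VI(G_y, X) where G_y(z) = η φ(ηᵀz) − η y. Then ‖x̂(y) − x‖₂ ≤ κ⁻¹ ‖η (y − φ(ηᵀx))‖₂. -/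
/-!
The field `G_y` is continuous, so by Minty's argument (`minty_strong`) the weak solution `x̂` is a
strong one: `⟪G_y x̂, x - x̂⟫ ≥ 0`. Strong monotonicity of `F` then gives
`κ ‖x̂ - x‖² ≤ ⟪F x̂ - F x, x̂ - x⟫ ≤ ⟪η y - F x, x̂ - x⟫`, and Cauchy–Schwarz bounds the right-hand
side by `‖η (y - φ (ηᵀ x))‖ ‖x̂ - x‖`.
-/

open Matrix
open scoped RealInnerProductSpace

/-- Minty's lemma: a weak solution of the variational inequality of a continuous field is a strong
solution. The weak inequality is tested at the points `a + t (x - a)` and `t` tends to `0⁺`. -/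
lemma minty_strong {E : Type*} [NormedAddCommGroup E] [InnerProductSpace ℝ E]
    {X : Set E} (hX : Convex ℝ X) {G : E → E} (hG : Continuous G) {a x : E}
    (ha : a ∈ X) (hx : x ∈ X) (hweak : ∀ z ∈ X, 0 ≤ ⟪G z, z - a⟫) :
    0 ≤ ⟪G a, x - a⟫ := by
  have hcont : Continuous fun t : ℝ => ⟪G (a + t • (x - a)), x - a⟫ := by fun_prop
  have hlim : Filter.Tendsto (fun t : ℝ => ⟪G (a + t • (x - a)), x - a⟫)
      (nhdsWithin 0 (Set.Ioi 0)) (nhds ⟪G a, x - a⟫) := by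
    have h := hcont.tendsto 0
    simp only [zero_smul, add_zero] at h
    exact h.mono_left nhdsWithin_le_nhds
  refine ge_of_tendsto hlim ?_
  filter_upwards [Ioc_mem_nhdsGT (zero_lt_one' ℝ)] with t ht
  have h := hweak _ (hX.add_smul_sub_mem ha hx ⟨ht.1.le, ht.2⟩)
  rw [add_sub_cancel_left, real_inner_smul_right] at h
  exact nonneg_of_mul_nonneg_right h ht.1

/-- Single-observation case: if `F(z) = η φ(ηᵀz)` is monotone with modulus `κ > 0` on the
convex compact set `X ∋ x`, and `x̂(y)` is a weak solution to `VI(G_y, X)` with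
`G_y(z) = η φ(ηᵀz) − η y`, then `‖x̂(y) − x‖₂ ≤ κ⁻¹ ‖η (y − φ(ηᵀx))‖₂`. -/
theorem stmt_11 {n m K : ℕ}
    (X : Set (EuclideanSpace ℝ (Fin n)))
    (hXne : X.Nonempty) (hXconv : Convex ℝ X) (hXcomp : IsCompact X)
    (η : Matrix (Fin n) (Fin (m * K)) ℝ)
    (φ : EuclideanSpace ℝ (Fin (m * K)) → EuclideanSpace ℝ (Fin (m * K)))
    (hφcont : Continuous φ)
    (hφmono : ∀ u v : EuclideanSpace ℝ (Fin (m * K)), 0 ≤ ⟪φ u - φ v, u - v⟫)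
    (κ : ℝ) (hκ : 0 < κ)
    (hFmono : ∀ z ∈ X, ∀ z' ∈ X, κ * ‖z - z'‖ ^ 2 ≤
      ⟪Matrix.toEuclideanLin η (φ (Matrix.toEuclideanLin ηᵀ z))
        - Matrix.toEuclideanLin η (φ (Matrix.toEuclideanLin ηᵀ z')), z - z'⟫)
    (x : EuclideanSpace ℝ (Fin n)) (hx : x ∈ X)
    (y : EuclideanSpace ℝ (Fin (m * K)))
    (xhat : EuclideanSpace ℝ (Fin n)) (hxhat : xhat ∈ X)
    (hweak : ∀ z ∈ X, 0 ≤
      ⟪Matrix.toEuclideanLin η (φ (Matrix.toEuclideanLin ηᵀ z))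
        - Matrix.toEuclideanLin η y, z - xhat⟫) :
    ‖xhat - x‖ ≤ κ⁻¹ * ‖Matrix.toEuclideanLin η (y - φ (Matrix.toEuclideanLin ηᵀ x))‖ := by
  have hcont : Continuous fun z => Matrix.toEuclideanLin η (φ (Matrix.toEuclideanLin ηᵀ z))
      - Matrix.toEuclideanLin η y :=
    ((LinearMap.continuous_of_finiteDimensional _).comp
      (hφcont.comp (LinearMap.continuous_of_finiteDimensional _))).sub continuous_const
  have hstrong := minty_strong hXconv hcont hxhat hx hweak
  have hmono := hFmono xhat hxhat x hx
  have hcs := real_inner_le_norm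
    (Matrix.toEuclideanLin η (y - φ (Matrix.toEuclideanLin ηᵀ x))) (xhat - x)
  rw [map_sub] at hcs ⊢
  rw [← neg_sub xhat x, inner_neg_right] at hstrong
  simp only [inner_sub_left] at hstrong hmono hcs
  rw [le_inv_mul_iff₀ hκ]
  rcases (norm_nonneg (xhat - x)).eq_or_lt with h0 | hpos
  · rw [← h0, mul_zero]
    exact norm_nonneg _
  · refine le_of_mul_le_mul_right ?_ hpos
    nlinarith
end

section
/- Let X ⊂ ℝ^n be a nonempty convex compact set, let η ∈ ℝ^{n×mK} be a fixed matrix, and let φ : ℝ^{mK} → ℝ^{mK} be continuous and monotone, such that F(z) = η φ(ηᵀz) is monotone with modulus κ > 0 on X. Let x ∈ X and let y be a random vector in ℝ^{mK} with E[‖η(y − φ(ηᵀx))‖₂²] ≤ σ². Suppose that for every realization of y, x̂(y) ∈ X is a weak solution to VI(G_y, X) with G_y(z) = η φ(ηᵀz) − η y, measurably in y. Then E[‖x̂(y) − x‖₂²] ≤ σ²/κ². -/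
/-!
By Minty's argument (`strong_of_weak`), continuity of `F(z) = η φ(ηᵀz)` turns the weak solution
`x̂(v)` into a strong one: `⟪F(x̂) - η v, z - x̂⟫ ≥ 0` on `X`. Taking `z = x` and using strong
monotonicity of `F` gives the pointwise bound
`κ ‖x̂ - x‖² ≤ ⟪F(x̂) - F(x), x̂ - x⟫ ≤ ⟪η v - F(x), x̂ - x⟫ ≤ ‖η (v - φ(ηᵀx))‖ ‖x̂ - x‖`
(`norm_sub_le_of_weak`), hence `κ ‖x̂ - x‖ ≤ ‖η (v - φ(ηᵀx))‖`; squaring and integrating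
yields the claim.
-/

open MeasureTheory Matrix
open scoped RealInnerProductSpace

section

variable {E : Type*} [NormedAddCommGroup E] [InnerProductSpace ℝ E]

/-- Minty's lemma: on a convex set, a weak solution of the variational inequality of a
continuous vector field is a strong solution. -/
lemma strong_of_weak {X : Set E} (hX : Convex ℝ X) {G : E → E} (hG : Continuous G)
    {w : E} (hw : w ∈ X) (hweak : ∀ z ∈ X, 0 ≤ ⟪G z, z - w⟫) {x : E} (hx : x ∈ X) :
    0 ≤ ⟪G w, x - w⟫ := by
  -- Test the weak inequality at `w + t (x - w)`, divide by `t`, and let `t → 0⁺`.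
  have hcont : Continuous fun t : ℝ => ⟪G (w + t • (x - w)), x - w⟫ := by fun_prop
  have hlim : Filter.Tendsto (fun t : ℝ => ⟪G (w + t • (x - w)), x - w⟫)
      (nhdsWithin 0 (Set.Ioi 0)) (nhds ⟪G w, x - w⟫) := by
    have h := (hcont.tendsto 0).mono_left (nhdsWithin_le_nhds (s := Set.Ioi (0 : ℝ)))
    simpa using h
  refine ge_of_tendsto hlim ?_
  filter_upwards [Ioo_mem_nhdsGT (zero_lt_one' ℝ)] with t ht
  have h := hweak _ (hX.add_smul_sub_mem hw hx ⟨ht.1.le, ht.2.le⟩)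
  rw [add_sub_cancel_left, real_inner_smul_right] at h
  exact nonneg_of_mul_nonneg_right h ht.1

/-- Pointwise stability: if `F` is continuous and monotone with modulus `κ`, the distance from a
weak solution for `F - b` to any `x ∈ X` is controlled by the residual `b - F x`. -/
lemma norm_sub_le_of_weak {X : Set E} (hX : Convex ℝ X) {F : E → E} (hF : Continuous F)
    {κ : ℝ} (hmono : ∀ z ∈ X, ∀ z' ∈ X, κ * ‖z - z'‖ ^ 2 ≤ ⟪F z - F z', z - z'⟫)
    {x w b : E} (hx : x ∈ X) (hw : w ∈ X) (hweak : ∀ z ∈ X, 0 ≤ ⟪F z - b, z - w⟫) :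
    κ * ‖w - x‖ ≤ ‖b - F x‖ := by
  have hstrong : 0 ≤ ⟪F w - b, x - w⟫ :=
    strong_of_weak (G := fun z => F z - b) hX (by fun_prop) hw hweak hx
  have hsplit : ⟪F w - F x, w - x⟫ = ⟪b - F x, w - x⟫ - ⟪F w - b, x - w⟫ := by
    rw [← neg_sub w x, inner_neg_right, sub_neg_eq_add, ← inner_add_left]
    congr 1
    abel
  have hcs := real_inner_le_norm (b - F x) (w - x)
  have hm := hmono w hw x hx
  rcases (norm_nonneg (w - x)).eq_or_lt with h0 | hpos
  · rw [← h0, mul_zero]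
    exact norm_nonneg _
  · refine le_of_mul_le_mul_right ?_ hpos
    nlinarith

end

/-- Single-observation case, in expectation: if `F(z) = η φ(ηᵀz)` is monotone with modulus
`κ > 0` on the convex compact `X ∋ x`, the noise satisfies `E[‖η(y − φ(ηᵀx))‖₂²] ≤ σ²`, and
`x̂(y)` is (measurably in `y`) a weak solution to `VI(G_y, X)` with
`G_y(z) = η φ(ηᵀz) − η y`, then `E[‖x̂(y) − x‖₂²] ≤ σ²/κ²`. -/
theorem stmt_12 {n m K : ℕ}
    (X : Set (EuclideanSpace ℝ (Fin n)))
    (hXne : X.Nonempty) (hXconv : Convex ℝ X) (hXcomp : IsCompact X)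
    (η : Matrix (Fin n) (Fin (m * K)) ℝ)
    (φ : EuclideanSpace ℝ (Fin (m * K)) → EuclideanSpace ℝ (Fin (m * K)))
    (hφcont : Continuous φ)
    (hφmono : ∀ u v : EuclideanSpace ℝ (Fin (m * K)), 0 ≤ ⟪φ u - φ v, u - v⟫)
    (κ : ℝ) (hκ : 0 < κ)
    (hFmono : ∀ z ∈ X, ∀ z' ∈ X, κ * ‖z - z'‖ ^ 2 ≤
      ⟪Matrix.toEuclideanLin η (φ (Matrix.toEuclideanLin ηᵀ z))
        - Matrix.toEuclideanLin η (φ (Matrix.toEuclideanLin ηᵀ z')), z - z'⟫)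
    (x : EuclideanSpace ℝ (Fin n)) (hx : x ∈ X)
    {Ω : Type*} [MeasurableSpace Ω] (μ : Measure Ω) [IsProbabilityMeasure μ]
    (y : Ω → EuclideanSpace ℝ (Fin (m * K))) (hy : Measurable y)
    (σ : ℝ)
    (hσ : ∫⁻ ω, ENNReal.ofReal
        (‖Matrix.toEuclideanLin η (y ω - φ (Matrix.toEuclideanLin ηᵀ x))‖ ^ 2) ∂μ
      ≤ ENNReal.ofReal (σ ^ 2))
    (xhat : EuclideanSpace ℝ (Fin (m * K)) → EuclideanSpace ℝ (Fin n))
    (hxhatm : Measurable xhat)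
    (hxhatX : ∀ v, xhat v ∈ X)
    (hweak : ∀ v : EuclideanSpace ℝ (Fin (m * K)), ∀ z ∈ X, 0 ≤
      ⟪Matrix.toEuclideanLin η (φ (Matrix.toEuclideanLin ηᵀ z))
        - Matrix.toEuclideanLin η v, z - xhat v⟫) :
    ∫⁻ ω, ENNReal.ofReal (‖xhat (y ω) - x‖ ^ 2) ∂μ ≤ ENNReal.ofReal (σ ^ 2 / κ ^ 2) := by
  have hF : Continuous fun z : EuclideanSpace ℝ (Fin n) =>
      Matrix.toEuclideanLin η (φ (Matrix.toEuclideanLin ηᵀ z)) :=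
    (LinearMap.continuous_of_finiteDimensional (Matrix.toEuclideanLin η)).comp
      (hφcont.comp (LinearMap.continuous_of_finiteDimensional (Matrix.toEuclideanLin ηᵀ)))
  have hpt : ∀ v, ‖xhat v - x‖ ^ 2 ≤ (κ ^ 2)⁻¹ *
      ‖Matrix.toEuclideanLin η (v - φ (Matrix.toEuclideanLin ηᵀ x))‖ ^ 2 := by
    intro v
    have h := norm_sub_le_of_weak hXconv hF hFmono hx (hxhatX v) (hweak v)
    rw [← map_sub] at h
    rw [inv_mul_eq_div, le_div_iff₀ (by positivity), mul_comm, ← mul_pow]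
    exact pow_le_pow_left₀ (by positivity) h 2
  calc ∫⁻ ω, ENNReal.ofReal (‖xhat (y ω) - x‖ ^ 2) ∂μ
      ≤ ∫⁻ ω, ENNReal.ofReal ((κ ^ 2)⁻¹) * ENNReal.ofReal
          (‖Matrix.toEuclideanLin η (y ω - φ (Matrix.toEuclideanLin ηᵀ x))‖ ^ 2) ∂μ := by
        refine lintegral_mono fun ω => ?_
        rw [← ENNReal.ofReal_mul (by positivity)]
        exact ENNReal.ofReal_le_ofReal (hpt (y ω))
    _ = ENNReal.ofReal ((κ ^ 2)⁻¹) * ∫⁻ ω, ENNReal.ofReal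
          (‖Matrix.toEuclideanLin η (y ω - φ (Matrix.toEuclideanLin ηᵀ x))‖ ^ 2) ∂μ :=
        lintegral_const_mul' _ _ ENNReal.ofReal_ne_top
    _ ≤ ENNReal.ofReal ((κ ^ 2)⁻¹) * ENNReal.ofReal (σ ^ 2) := by gcongr
    _ = ENNReal.ofReal (σ ^ 2 / κ ^ 2) := by
        rw [← ENNReal.ofReal_mul (by positivity), inv_mul_eq_div]
end
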